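/- For every integer n ≥ 2, the variance in the space domain of the Abel-Poisson wavelet satisfies lim_{ρ→0+} (e^{2ρ} A(ρ)² / B(ρ)² - 1) / ρ² = (n² - 3n + 3) / (n(n-1)). -/

import Mathlib

/-!
Write `x = e^{-2ρ}`, `q = e^{-ρ}` and `r = n - 1`. After multiplication by `(1 - x)^r`, the series
`A` and `B` become means under the negative binomial distribution with weights
`C(l+r-1, l) x^l (1-x)^r`. Its first two moments give `A` in closed form. In `B` we write
`√(l(l+1)) = l + 1/2 - g(l)`; the polynomial part again has a closed form, while `l * g(l) → 1/8`,
so the mean of the correction `2(l+r) g(l)` tends to `1/4` as `x → 1`, because the weights escape to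
infinity.

With `V` this mean, the resulting polynomials in `q` combine to
`(1 - x)^{r+2} (e^ρ A - B) = (1 - q)² (r q - 1 + (1 + q)² V / r)`.
The factor `(1 - q)²` is asymptotic to `ρ²`, both `(1 - x)^{r+2} A` and `(1 - x)^{r+2} B` tend to
`2(r + 1)`, and the limit follows.
-/

open Filter

/-- `S n m ρ = Σ_{l=1}^∞ C(l+n-2, l) · l^m · e^{-2ρl}`. -/
noncomputable def S (n : ℕ) (m : ℤ) (ρ : ℝ) : ℝ :=
  ∑' l : ℕ, (Nat.choose (l + 1 + n - 2) (l + 1) : ℝ) * ((l : ℝ) + 1) ^ m *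
    Real.exp (-2 * ρ * ((l : ℝ) + 1))

/-- `A(ρ) = (2/(n-1)) S_{n,2}(ρ) + S_{n,1}(ρ)`. -/
noncomputable def A (n : ℕ) (ρ : ℝ) : ℝ :=
  2 / ((n : ℝ) - 1) * S n 2 ρ + S n 1 ρ

/-- `B(ρ) = Σ_{l=1}^∞ (2(l+n-1)/(n-1)) C(l+n-2,l) √(l(l+1)) e^{-2ρl}`. -/
noncomputable def B (n : ℕ) (ρ : ℝ) : ℝ :=
  ∑' l : ℕ, 2 * (((l : ℝ) + 1) + (n : ℝ) - 1) / ((n : ℝ) - 1) *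
    (Nat.choose (l + 1 + n - 2) (l + 1) : ℝ) *
    Real.sqrt (((l : ℝ) + 1) * ((l : ℝ) + 2)) * Real.exp (-2 * ρ * ((l : ℝ) + 1))

open scoped Topology

section GeneralLemmas

theorem tsum_nat_add_one_eq_tsum {α : Type*} [AddCommMonoid α] [TopologicalSpace α] {f : ℕ → α}
    (hf : f 0 = 0) : ∑' l, f (l + 1) = ∑' l, f l :=
  tsum_pnat_eq_tsum_succ.symm.trans (tsum_pnat_eq_tsum_of_eq_zero hf)

variable {ι E : Type*} [NormedAddCommGroup E] [NormedSpace ℝ E] [CompleteSpace E]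

theorem norm_tsum_smul_sub_le {w : ι → ℝ} {u : ι → E} {L : E} {ε : ℝ} (s : Finset ι)
    (hw_nonneg : ∀ i, 0 ≤ w i) (hw_sum : HasSum w 1) (hε : 0 ≤ ε)
    (hu : ∀ i ∉ s, ‖u i - L‖ ≤ ε) :
    ‖∑' i, w i • u i - L‖ ≤ ∑ i ∈ s, w i * ‖u i - L‖ + ε := by
  classical
  have hdom : HasSum (fun i => (if i ∈ s then w i * ‖u i - L‖ else 0) + w i * ε)
      (∑ i ∈ s, w i * ‖u i - L‖ + ε) := by
    have h_fin : HasSum (fun i => if i ∈ s then w i * ‖u i - L‖ else 0)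
        (∑ i ∈ s, w i * ‖u i - L‖) := by
      rw [← Finset.sum_congr rfl fun i hi => if_pos hi]
      exact hasSum_sum_of_ne_finset_zero fun i hi => if_neg hi
    simpa only [one_mul] using h_fin.add (hw_sum.mul_right ε)
  have hle : ∀ i, ‖w i • (u i - L)‖ ≤ (if i ∈ s then w i * ‖u i - L‖ else 0) + w i * ε := by
    intro i
    rw [norm_smul, Real.norm_of_nonneg (hw_nonneg i)]
    split_ifs with hi
    · exact le_add_of_nonneg_right (mul_nonneg (hw_nonneg i) hε)
    · rw [zero_add]
      exact mul_le_mul_of_nonneg_left (hu i hi) (hw_nonneg i)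
  have hsum : Summable fun i => w i • (u i - L) := .of_norm_bounded hdom.summable hle
  have hsplit : ∑' i, w i • u i = ∑' i, w i • (u i - L) + L := by
    simpa only [smul_sub, sub_add_cancel, one_smul] using
      (hsum.hasSum.add (hw_sum.smul_const L)).tsum_eq
  rw [hsplit, add_sub_cancel_right]
  exact tsum_of_norm_bounded hdom hle

/-- The Silverman–Toeplitz theorem for probability weights. -/
theorem tendsto_tsum_smul_of_tendsto_cofinite {α : Type*} {l : Filter α} {w : α → ι → ℝ}
    {u : ι → E} {L : E} (hw_nonneg : ∀ᶠ a in l, ∀ i, 0 ≤ w a i)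
    (hw_sum : ∀ᶠ a in l, HasSum (w a) 1) (hw_zero : ∀ i, Tendsto (fun a => w a i) l (𝓝 0))
    (hu : Tendsto u cofinite (𝓝 L)) : Tendsto (fun a => ∑' i, w a i • u i) l (𝓝 L) := by
  refine Metric.tendsto_nhds.2 fun ε hε => ?_
  have hfin : {i | ¬ dist (u i) L < ε / 2}.Finite :=
    eventually_cofinite.1 (Metric.tendsto_nhds.1 hu (ε / 2) (half_pos hε))
  have hhead : Tendsto (fun a => ∑ i ∈ hfin.toFinset, w a i * ‖u i - L‖) l (𝓝 0) := by
    simpa only [zero_mul, Finset.sum_const_zero] using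
      tendsto_finsetSum hfin.toFinset fun i _ => (hw_zero i).mul_const ‖u i - L‖
  filter_upwards [hw_nonneg, hw_sum, hhead.eventually_lt_const (half_pos hε)] with a h0 h1 hlt
  have hle := norm_tsum_smul_sub_le hfin.toFinset h0 h1 (half_pos hε).le (u := u) (L := L)
    fun i hi => by
      rw [hfin.mem_toFinset, Set.mem_ofPred_eq, not_not, dist_eq_norm] at hi
      exact hi.le
  rw [dist_eq_norm]
  linarith

theorem tendsto_sq_div_sq_sub_one_div {α 𝕜 : Type*} [Field 𝕜] [TopologicalSpace 𝕜]
    [IsTopologicalDivisionRing 𝕜] [T1Space 𝕜] {l : Filter α} {f g d : α → 𝕜} {c m : 𝕜}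
    (hc : c ≠ 0) (hf : Tendsto f l (𝓝 c)) (hg : Tendsto g l (𝓝 c))
    (hfg : Tendsto (fun a => (f a - g a) / d a) l (𝓝 m)) :
    Tendsto (fun a => (f a ^ 2 / g a ^ 2 - 1) / d a) l (𝓝 (2 * m / c)) := by
  have hlim : Tendsto (fun a => (f a - g a) / d a * ((f a + g a) / g a ^ 2)) l
      (𝓝 (m * ((c + c) / c ^ 2))) :=
    hfg.mul ((hf.add hg).div (hg.pow 2) (pow_ne_zero 2 hc))
  have hval : m * ((c + c) / c ^ 2) = 2 * m / c := by
    field_simp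
    ring
  rw [← hval]
  refine hlim.congr' ?_
  filter_upwards [hg.eventually_ne hc] with a ha
  rw [div_sub_one (pow_ne_zero 2 ha), sq_sub_sq]
  ring

end GeneralLemmas

section NegBinomial

/-- The negative binomial distribution: the probability of exactly `l` failures before the
`(k + 1)`-st success, where each trial fails with probability `x`. -/
noncomputable def negBinomialWeight (k : ℕ) (x : ℝ) (l : ℕ) : ℝ :=
  (l + k).choose k * x ^ l * (1 - x) ^ (k + 1)

/-- The mean of the sequence `u` under the weights `negBinomialWeight k x`. The series `S`, `A`
and `B` in dimension `n = k + 2` take this form at `x = e^{-2ρ}`, up to a power of `1 - x`. -/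
noncomputable def negBinomialMean (k : ℕ) (u : ℕ → ℝ) (x : ℝ) : ℝ :=
  ∑' l, negBinomialWeight k x l * u l

variable {k : ℕ} {x : ℝ}

theorem negBinomialWeight_nonneg (hx0 : 0 ≤ x) (hx1 : x ≤ 1) (l : ℕ) :
    0 ≤ negBinomialWeight k x l :=
  mul_nonneg (by positivity) (pow_nonneg (sub_nonneg.2 hx1) _)

theorem hasSum_negBinomialWeight (hx : ‖x‖ < 1) : HasSum (negBinomialWeight k x) 1 := by
  have h := (hasSum_choose_mul_geometric_of_norm_lt_one k hx).mul_right ((1 - x) ^ (k + 1))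
  rwa [one_div_mul_cancel (pow_ne_zero _ (isUnit_one_sub_of_norm_lt_one hx).ne_zero)] at h

theorem tendsto_negBinomialWeight_zero (k l : ℕ) :
    Tendsto (fun x => negBinomialWeight k x l) (𝓝[<] 1) (𝓝 0) := by
  have hcont : Continuous fun x => negBinomialWeight k x l := by
    unfold negBinomialWeight
    fun_prop
  have h_one : negBinomialWeight k 1 l = 0 := by simp [negBinomialWeight]
  exact h_one ▸ (hcont.tendsto 1).mono_left nhdsWithin_le_nhds

theorem summable_negBinomialWeight_mul {u : ℕ → ℝ} {L : ℝ} (hx : ‖x‖ < 1)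
    (hu : Tendsto u atTop (𝓝 L)) : Summable fun l => negBinomialWeight k x l * u l :=
  (hasSum_negBinomialWeight hx).summable.norm.mul_tendsto_const (Nat.cofinite_eq_atTop ▸ hu)

theorem tendsto_negBinomialMean {u : ℕ → ℝ} {L : ℝ} (hu : Tendsto u atTop (𝓝 L)) :
    Tendsto (negBinomialMean k u) (𝓝[<] 1) (𝓝 L) := by
  have hx : ∀ᶠ x : ℝ in 𝓝[<] 1, x ∈ Set.Ioo (0 : ℝ) 1 := Ioo_mem_nhdsLT one_pos
  refine tendsto_tsum_smul_of_tendsto_cofinite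
    (hx.mono fun x hx => negBinomialWeight_nonneg hx.1.le hx.2.le)
    (hx.mono fun x hx => hasSum_negBinomialWeight ?_) (tendsto_negBinomialWeight_zero k)
    (Nat.cofinite_eq_atTop ▸ hu)
  rw [Real.norm_of_nonneg hx.1.le]
  exact hx.2

theorem one_sub_mul_negBinomialWeight_mul_add (k : ℕ) (x : ℝ) (l : ℕ) :
    (1 - x) * (negBinomialWeight k x l * (l + k + 1)) =
      (k + 1) * negBinomialWeight (k + 1) x l := by
  have h : ((l + k + 1 : ℕ) : ℝ) * (l + k).choose k =
      (l + (k + 1)).choose (k + 1) * (k + 1 : ℕ) :=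
    mod_cast Nat.add_one_mul_choose_eq (l + k) k
  push_cast at h
  simp only [negBinomialWeight]
  linear_combination x ^ l * (1 - x) ^ (k + 2) * h

-- The factor `l + k + 1` turns `k + 1` successes into `k + 2`, so moments follow by recursion.
theorem hasSum_negBinomialWeight_mul_add_mul {u : ℕ → ℝ} {s : ℝ} (hx : ‖x‖ < 1)
    (h : HasSum (fun l => negBinomialWeight (k + 1) x l * u l) s) :
    HasSum (fun l => negBinomialWeight k x l * ((l + k + 1) * u l)) ((k + 1) / (1 - x) * s) := by
  refine (h.mul_left ((k + 1 : ℝ) / (1 - x))).congr_fun fun l => ?_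
  have hy := (isUnit_one_sub_of_norm_lt_one hx).ne_zero
  field_simp
  linear_combination u l * one_sub_mul_negBinomialWeight_mul_add k x l

theorem hasSum_negBinomialWeight_mul_natCast (hx : ‖x‖ < 1) :
    HasSum (fun l => negBinomialWeight k x l * l) ((k + 1) * x / (1 - x)) := by
  have h_zeroth : HasSum (fun l => negBinomialWeight (k + 1) x l * 1) 1 := by
    simpa only [mul_one] using hasSum_negBinomialWeight hx
  convert! (hasSum_negBinomialWeight_mul_add_mul hx h_zeroth).sub
    ((hasSum_negBinomialWeight hx).mul_right (k + 1 : ℝ)) using 1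
  · ext l
    ring
  · have hy := (isUnit_one_sub_of_norm_lt_one hx).ne_zero
    field_simp
    ring

theorem hasSum_negBinomialWeight_mul_natCast_sq (hx : ‖x‖ < 1) :
    HasSum (fun l => negBinomialWeight k x l * (l : ℝ) ^ 2)
      ((k + 1) * x * (1 + (k + 1) * x) / (1 - x) ^ 2) := by
  convert! (hasSum_negBinomialWeight_mul_add_mul hx (hasSum_negBinomialWeight_mul_natCast hx)).sub
    ((hasSum_negBinomialWeight_mul_natCast hx).mul_left (k + 1 : ℝ)) using 1
  · ext l
    ring
  · have hy := (isUnit_one_sub_of_norm_lt_one hx).ne_zero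
    field_simp
    push_cast
    ring

theorem hasSum_negBinomialWeight_mul_quadratic (hx : ‖x‖ < 1) (a b c : ℝ) :
    HasSum (fun l => negBinomialWeight k x l * (a * l ^ 2 + b * l + c))
      (a * ((k + 1) * x * (1 + (k + 1) * x) / (1 - x) ^ 2) + b * ((k + 1) * x / (1 - x)) + c) := by
  convert! (((hasSum_negBinomialWeight_mul_natCast_sq hx).mul_left a).add
    ((hasSum_negBinomialWeight_mul_natCast hx).mul_left b)).add
    ((hasSum_negBinomialWeight hx).mul_left c) using 1
  · ext l
    ring
  · ring

end NegBinomial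

section SqrtGap

/-- The gap between the arithmetic and the geometric mean of `t` and `t + 1`, i.e. the
error in replacing `√(t (t + 1))` by `t + 1 / 2`. -/
noncomputable def sqrtGap (t : ℝ) : ℝ := t + 1 / 2 - √(t * (t + 1))

theorem sqrtGap_eq_one_div {t : ℝ} (ht : 0 ≤ t) :
    sqrtGap t = 1 / (4 * (t + 1 / 2 + √(t * (t + 1)))) := by
  rw [sqrtGap, eq_div_iff (by positivity)]
  linear_combination -4 * Real.sq_sqrt (show 0 ≤ t * (t + 1) by positivity)

theorem tendsto_add_const_mul_sqrtGap (c : ℝ) :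
    Tendsto (fun t => (t + c) * sqrtGap t) atTop (𝓝 (1 / 8)) := by
  have hinv : Tendsto (fun t : ℝ => t⁻¹) atTop (𝓝 0) := tendsto_inv_atTop_zero
  have hlim : Tendsto (fun t : ℝ => (1 + c * t⁻¹) / (4 * (1 + 1 / 2 * t⁻¹ + √(1 + t⁻¹)))) atTop
      (𝓝 ((1 + c * 0) / (4 * (1 + 1 / 2 * 0 + √(1 + 0))))) :=
    ((hinv.const_mul c).const_add 1).div
      ((((hinv.const_mul (1 / 2)).const_add 1).add (hinv.const_add 1).sqrt).const_mul 4) (by simp)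
  have hval : (1 + c * 0) / (4 * (1 + 1 / 2 * 0 + √(1 + 0))) = 1 / 8 := by norm_num
  rw [← hval]
  refine hlim.congr' ?_
  filter_upwards [eventually_gt_atTop 0] with t ht
  have hsqrt : √(t * (t + 1)) = t * √(1 + t⁻¹) := by
    rw [show t * (t + 1) = t ^ 2 * (1 + t⁻¹) by field_simp, Real.sqrt_mul (sq_nonneg t),
      Real.sqrt_sq ht.le]
  rw [sqrtGap_eq_one_div ht.le, hsqrt]
  field_simp

/-- The sequence `2 (l + k + 1) sqrtGap l`, whose negative binomial mean is the part of
`(k + 1) (1 - x) ^ (k + 1) B` left over after replacing `√(l (l + 1))` by `l + 1 / 2`, up to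
sign. -/
noncomputable def gapCorrection (k l : ℕ) : ℝ := 2 * (l + k + 1) * sqrtGap l

theorem tendsto_gapCorrection (k : ℕ) : Tendsto (gapCorrection k) atTop (𝓝 (1 / 4)) := by
  have h := ((tendsto_add_const_mul_sqrtGap (k + 1)).comp tendsto_natCast_atTop_atTop).const_mul 2
  rw [show (2 : ℝ) * (1 / 8) = 1 / 4 by norm_num] at h
  refine h.congr fun l => ?_
  simp only [gapCorrection, Function.comp_apply]
  ring

end SqrtGap

section AbelPoisson

theorem exp_neg_two_mul_mul_natCast_add_one (ρ : ℝ) (l : ℕ) :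
    Real.exp (-2 * ρ * (l + 1)) = Real.exp (-2 * ρ) ^ (l + 1) := by
  rw [← Real.exp_nat_mul, Nat.cast_add_one, mul_comm]

theorem norm_exp_neg_two_mul_lt_one {ρ : ℝ} (hρ : 0 < ρ) : ‖Real.exp (-2 * ρ)‖ < 1 := by
  rw [Real.norm_of_nonneg (Real.exp_pos _).le, Real.exp_lt_one_iff]
  linarith

theorem choose_add_two_sub_two (l k : ℕ) :
    (l + 1 + (k + 2) - 2).choose (l + 1) = (l + 1 + k).choose k :=
  Nat.choose_symm_add

theorem one_sub_exp_pow_mul_S (k : ℕ) {m : ℤ} (hm : m ≠ 0) (ρ : ℝ) :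
    (1 - Real.exp (-2 * ρ)) ^ (k + 1) * S (k + 2) m ρ =
      negBinomialMean k (fun l => (l : ℝ) ^ m) (Real.exp (-2 * ρ)) := by
  rw [negBinomialMean, ← tsum_nat_add_one_eq_tsum (by simp [zero_zpow m hm]), S, ← tsum_mul_left]
  refine tsum_congr fun l => ?_
  rw [exp_neg_two_mul_mul_natCast_add_one, choose_add_two_sub_two, negBinomialWeight]
  push_cast
  ring

theorem one_sub_exp_pow_mul_B (k : ℕ) (ρ : ℝ) :
    (1 - Real.exp (-2 * ρ)) ^ (k + 1) * B (k + 2) ρ =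
      negBinomialMean k (fun l => 2 * (l + k + 1) / (k + 1) * √(l * (l + 1)))
        (Real.exp (-2 * ρ)) := by
  rw [negBinomialMean, ← tsum_nat_add_one_eq_tsum (by simp), B, ← tsum_mul_left]
  refine tsum_congr fun l => ?_
  rw [exp_neg_two_mul_mul_natCast_add_one, choose_add_two_sub_two, negBinomialWeight]
  push_cast
  rw [show (k : ℝ) + 2 - 1 = k + 1 by ring, show (l : ℝ) + 1 + 1 = l + 2 by ring]
  ring

theorem one_sub_exp_pow_mul_S_one (k : ℕ) {ρ : ℝ} (hρ : 0 < ρ) :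
    (1 - Real.exp (-2 * ρ)) ^ (k + 1) * S (k + 2) 1 ρ =
      (k + 1) * Real.exp (-2 * ρ) / (1 - Real.exp (-2 * ρ)) := by
  simp only [one_sub_exp_pow_mul_S k one_ne_zero, zpow_one]
  exact (hasSum_negBinomialWeight_mul_natCast (norm_exp_neg_two_mul_lt_one hρ)).tsum_eq

theorem one_sub_exp_pow_mul_S_two (k : ℕ) {ρ : ℝ} (hρ : 0 < ρ) :
    (1 - Real.exp (-2 * ρ)) ^ (k + 1) * S (k + 2) 2 ρ =
      (k + 1) * Real.exp (-2 * ρ) * (1 + (k + 1) * Real.exp (-2 * ρ)) /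
        (1 - Real.exp (-2 * ρ)) ^ 2 := by
  simp only [one_sub_exp_pow_mul_S k two_ne_zero, zpow_ofNat]
  exact (hasSum_negBinomialWeight_mul_natCast_sq (norm_exp_neg_two_mul_lt_one hρ)).tsum_eq

theorem one_sub_exp_pow_mul_A_eq (k : ℕ) {ρ : ℝ} (hρ : 0 < ρ) :
    (1 - Real.exp (-2 * ρ)) ^ (k + 3) * A (k + 2) ρ =
      Real.exp (-2 * ρ) * (k + 3 + (k + 1) * Real.exp (-2 * ρ)) := by
  have hy := (isUnit_one_sub_of_norm_lt_one (norm_exp_neg_two_mul_lt_one hρ)).ne_zero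
  have hS1 := one_sub_exp_pow_mul_S_one k hρ
  have hS2 := one_sub_exp_pow_mul_S_two k hρ
  rw [A, Nat.cast_add, Nat.cast_ofNat, show (k : ℝ) + 2 - 1 = k + 1 by ring]
  generalize Real.exp (-2 * ρ) = x at *
  rw [eq_div_iff (by positivity)] at hS1 hS2
  field_simp
  linear_combination 2 * hS2 + (k + 1) * (1 - x) * hS1

theorem negBinomialMean_mul_sqrt (k : ℕ) {x : ℝ} (hx : ‖x‖ < 1) :
    negBinomialMean k (fun l => 2 * (l + k + 1) / (k + 1) * √(l * (l + 1))) x =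
      (1 + (2 * k + 3) * x) / (1 - x) ^ 2 - negBinomialMean k (gapCorrection k) x / (k + 1) := by
  have hpoly := hasSum_negBinomialWeight_mul_quadratic hx (k := k)
    (2 / (k + 1)) ((2 * k + 3) / (k + 1)) 1
  have hgap := (summable_negBinomialWeight_mul (k := k) hx (tendsto_gapCorrection k)).hasSum
  have hy := (isUnit_one_sub_of_norm_lt_one hx).ne_zero
  convert! (hpoly.sub (hgap.div_const (k + 1 : ℝ))).tsum_eq using 1
  · refine tsum_congr fun l => ?_
    rw [gapCorrection, sqrtGap]
    field_simp
    ring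
  · rw [negBinomialMean]
    field_simp
    ring

theorem one_sub_exp_pow_mul_B_eq (k : ℕ) {ρ : ℝ} (hρ : 0 < ρ) :
    (1 - Real.exp (-2 * ρ)) ^ (k + 3) * B (k + 2) ρ =
      1 + (2 * k + 3) * Real.exp (-2 * ρ) - (1 - Real.exp (-2 * ρ)) ^ 2 *
        (negBinomialMean k (gapCorrection k) (Real.exp (-2 * ρ)) / (k + 1)) := by
  have hx := norm_exp_neg_two_mul_lt_one hρ
  have hy := (isUnit_one_sub_of_norm_lt_one hx).ne_zero
  rw [pow_add _ (k + 1) 2, mul_right_comm, one_sub_exp_pow_mul_B,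
    negBinomialMean_mul_sqrt k hx, sub_mul, div_mul_cancel₀ _ (pow_ne_zero 2 hy),
    mul_comm ((1 - _) ^ 2)]

theorem exp_mul_one_sub_exp_pow_mul_A_sub_B_eq (k : ℕ) {ρ : ℝ} (hρ : 0 < ρ) :
    Real.exp ρ * ((1 - Real.exp (-2 * ρ)) ^ (k + 3) * A (k + 2) ρ) -
        (1 - Real.exp (-2 * ρ)) ^ (k + 3) * B (k + 2) ρ =
      (1 - Real.exp (-ρ)) ^ 2 * ((k + 1) * Real.exp (-ρ) - 1 + (1 + Real.exp (-ρ)) ^ 2 *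
        (negBinomialMean k (gapCorrection k) (Real.exp (-2 * ρ)) / (k + 1))) := by
  have hxq : Real.exp (-2 * ρ) = Real.exp (-ρ) ^ 2 := by
    rw [← Real.exp_nat_mul]
    ring_nf
  have hq : Real.exp ρ * Real.exp (-ρ) = 1 := by rw [← Real.exp_add, add_neg_cancel, Real.exp_zero]
  rw [one_sub_exp_pow_mul_A_eq k hρ, one_sub_exp_pow_mul_B_eq k hρ]
  generalize negBinomialMean k (gapCorrection k) (Real.exp (-2 * ρ)) / (k + 1) = v
  have h_double_root (q r : ℝ) :
      q * (r + 2 + r * q ^ 2) - (1 + (2 * r + 1) * q ^ 2) = (1 - q) ^ 2 * (r * q - 1) := by ring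
  rw [hxq]
  linear_combination h_double_root (Real.exp (-ρ)) (k + 1) +
    Real.exp (-ρ) * (k + 3 + (k + 1) * Real.exp (-ρ) ^ 2) * hq

theorem tendsto_exp_const_mul_nhdsWithin_zero (c : ℝ) (s : Set ℝ) :
    Tendsto (fun ρ => Real.exp (c * ρ)) (𝓝[s] 0) (𝓝 1) := by
  have hcont : Continuous fun ρ => Real.exp (c * ρ) := by fun_prop
  simpa only [mul_zero, Real.exp_zero] using (hcont.tendsto 0).mono_left nhdsWithin_le_nhds

theorem tendsto_negBinomialMean_gapCorrection_exp (k : ℕ) :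
    Tendsto (fun ρ => negBinomialMean k (gapCorrection k) (Real.exp (-2 * ρ))) (𝓝[>] 0)
      (𝓝 (1 / 4)) := by
  refine (tendsto_negBinomialMean (tendsto_gapCorrection k)).comp
    (tendsto_nhdsWithin_iff.2 ⟨tendsto_exp_const_mul_nhdsWithin_zero (-2) _, ?_⟩)
  filter_upwards [self_mem_nhdsWithin] with ρ hρ
  exact lt_of_abs_lt (norm_exp_neg_two_mul_lt_one hρ)

theorem tendsto_one_sub_exp_neg_div :
    Tendsto (fun ρ : ℝ => (1 - Real.exp (-ρ)) / ρ) (𝓝[≠] 0) (𝓝 1) := by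
  have hderiv : HasDerivAt (fun ρ : ℝ => 1 - Real.exp (-ρ)) 1 0 := by
    simpa using (hasDerivAt_neg (0 : ℝ)).exp.const_sub 1
  refine hderiv.tendsto_slope_zero.congr fun ρ => ?_
  simp [div_eq_inv_mul]

theorem tendsto_exp_mul_one_sub_exp_pow_mul_A (k : ℕ) :
    Tendsto (fun ρ => Real.exp ρ * ((1 - Real.exp (-2 * ρ)) ^ (k + 3) * A (k + 2) ρ)) (𝓝[>] 0)
      (𝓝 (2 * (k + 2))) := by
  have hx := tendsto_exp_const_mul_nhdsWithin_zero (-2) (.Ioi 0)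
  have hlim : Tendsto (fun ρ => Real.exp (1 * ρ) *
      (Real.exp (-2 * ρ) * (k + 3 + (k + 1) * Real.exp (-2 * ρ)))) (𝓝[>] 0)
      (𝓝 (1 * (1 * (k + 3 + (k + 1) * 1)))) :=
    (tendsto_exp_const_mul_nhdsWithin_zero 1 _).mul (hx.mul ((hx.const_mul _).const_add _))
  rw [show (2 * (k + 2) : ℝ) = 1 * (1 * (k + 3 + (k + 1) * 1)) by ring]
  refine hlim.congr' ?_
  filter_upwards [self_mem_nhdsWithin] with ρ hρ
  rw [one_sub_exp_pow_mul_A_eq k hρ, one_mul]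

theorem tendsto_one_sub_exp_pow_mul_B (k : ℕ) :
    Tendsto (fun ρ => (1 - Real.exp (-2 * ρ)) ^ (k + 3) * B (k + 2) ρ) (𝓝[>] 0)
      (𝓝 (2 * (k + 2))) := by
  have hx := tendsto_exp_const_mul_nhdsWithin_zero (-2) (.Ioi 0)
  have hlim := ((hx.const_mul (2 * k + 3 : ℝ)).const_add 1).sub (((hx.const_sub 1).pow 2).mul
    ((tendsto_negBinomialMean_gapCorrection_exp k).div_const (k + 1 : ℝ)))
  convert! hlim.congr' ?_ using 2
  · ring
  · filter_upwards [self_mem_nhdsWithin] with ρ hρ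
    rw [one_sub_exp_pow_mul_B_eq k hρ]

theorem tendsto_exp_mul_one_sub_exp_pow_mul_A_sub_B_div_sq (k : ℕ) :
    Tendsto (fun ρ => (Real.exp ρ * ((1 - Real.exp (-2 * ρ)) ^ (k + 3) * A (k + 2) ρ) -
      (1 - Real.exp (-2 * ρ)) ^ (k + 3) * B (k + 2) ρ) / ρ ^ 2) (𝓝[>] 0)
      (𝓝 ((k : ℝ) + 1 / (k + 1))) := by
  have hq : Tendsto (fun ρ : ℝ => Real.exp (-ρ)) (𝓝[>] 0) (𝓝 1) := by
    simpa only [neg_one_mul] using tendsto_exp_const_mul_nhdsWithin_zero (-1) (.Ioi 0)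
  have hlim := ((tendsto_one_sub_exp_neg_div.mono_left (nhdsGT_le_nhdsNE 0)).pow 2).mul
    (((hq.const_mul (k + 1 : ℝ)).sub_const 1).add (((hq.const_add 1).pow 2).mul
      ((tendsto_negBinomialMean_gapCorrection_exp k).div_const (k + 1 : ℝ))))
  convert! hlim.congr' ?_ using 2
  · ring
  · filter_upwards [self_mem_nhdsWithin] with ρ hρ
    rw [exp_mul_one_sub_exp_pow_mul_A_sub_B_eq k hρ, div_pow, div_mul_eq_mul_div]

end AbelPoisson

/-- `lim_{ρ→0+} (e^{2ρ} A(ρ)²/B(ρ)² - 1)/ρ² = (n²-3n+3)/(n(n-1))`. -/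
theorem stmt_14 (n : ℕ) (hn : 2 ≤ n) :
    Tendsto (fun ρ : ℝ => (Real.exp (2 * ρ) * (A n ρ) ^ 2 / (B n ρ) ^ 2 - 1) / ρ ^ 2)
      (nhdsWithin 0 (Set.Ioi 0))
      (nhds (((n : ℝ) ^ 2 - 3 * (n : ℝ) + 3) / ((n : ℝ) * ((n : ℝ) - 1)))) := by
  obtain ⟨k, rfl⟩ : ∃ k, n = k + 2 := ⟨n - 2, by omega⟩
  have hlim := tendsto_sq_div_sq_sub_one_div (by positivity)
    (tendsto_exp_mul_one_sub_exp_pow_mul_A k) (tendsto_one_sub_exp_pow_mul_B k)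
    (tendsto_exp_mul_one_sub_exp_pow_mul_A_sub_B_div_sq k)
  convert! hlim.congr' ?_ using 2
  · push_cast
    rw [show (k : ℝ) + 2 - 1 = k + 1 by ring]
    field_simp
    ring
  · filter_upwards [self_mem_nhdsWithin] with ρ hρ
    have hy := (isUnit_one_sub_of_norm_lt_one (norm_exp_neg_two_mul_lt_one hρ)).ne_zero
    have hexp : Real.exp (2 * ρ) = Real.exp ρ ^ 2 := by
      rw [← Real.exp_nat_mul, Nat.cast_ofNat]
    rw [mul_left_comm (Real.exp ρ), mul_pow, mul_pow _ (B _ _),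
      mul_div_mul_left _ _ (pow_ne_zero 2 (pow_ne_zero _ hy)), mul_pow, hexp]
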